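/- Let n > 0 be a real number, let γ > 0, μ, a₁, a₂ be real constants, and set α = −2/n, β = −(n + 2)/n, a₃ = √(γ/n), κ = a₁²·(1 + 2γμ) and a₄ = −μ·a₁². Then the function u(x,t) = a₂·(sech(a₃·(x − a₁·t)))ⁿ + a₄ (real power of the everywhere-positive function sech) solves equation (1) at every point (x,t) ∈ ℝ². -/

import Mathlib

/-!
In the frame of a wave `u = w (x - c t) - μ c²`, the shift `-μ c²` cancels the term `μ u_xxtt`
against part of `u u_xxxx`, and `κ = c² (1 + 2 γ μ)` cancels `u_tt` against the linear part of
`(κ u + γ u²)_xx`. What is left is the homogeneous quadratic equation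
`γ (w²)'' + w w'''' + α w' w''' + β (w'')² = 0`.

If the logarithmic derivative `r` of `w` solves the Riccati equation `r' = m r² - γ`, then
`w⁽ᵏ⁾ = qₖ(r) w` with polynomials `qₖ`, so that the quadratic equation becomes a polynomial identity
in `r`, valid for `α = -2 m` and `β = -(1 + 2 m)`. The function `sech` has such a logarithmic
derivative, `-tanh`, and the class is stable under dilations, powers and scalar multiples.
-/

/-- `u` solves equation (1), the nonlinear fourth order PDE
`u_tt = (κ u + γ u²)_xx + u u_xxxx + μ u_xxtt + α u_x u_xxx + β (u_xx)²`,
at the point `(x, t)`. -/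
noncomputable def SolvesEq1 (α β γ κ μ : ℝ) (u : ℝ → ℝ → ℝ) (x t : ℝ) : Prop :=
  iteratedDeriv 2 (fun s => u x s) t =
    iteratedDeriv 2 (fun y => κ * u y t + γ * (u y t) ^ 2) x
    + u x t * iteratedDeriv 4 (fun y => u y t) x
    + μ * iteratedDeriv 2 (fun y => iteratedDeriv 2 (fun s => u y s) t) x
    + α * deriv (fun y => u y t) x * iteratedDeriv 3 (fun y => u y t) x
    + β * (iteratedDeriv 2 (fun y => u y t) x) ^ 2

open Polynomial

section IteratedDeriv

variable {𝕜 F : Type*} [NontriviallyNormedField 𝕜] [NormedAddCommGroup F] [NormedSpace 𝕜 F]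
  {k : ℕ} {w : 𝕜 → 𝕜}

theorem iteratedDeriv_iteratedDeriv (j k : ℕ) (f : 𝕜 → F) :
    iteratedDeriv j (iteratedDeriv k f) = iteratedDeriv (j + k) f := by
  simp only [iteratedDeriv_eq_iterate, ← Function.iterate_add_apply]

theorem iteratedDeriv_comp_sub_add_const (hk : 0 < k) (f : 𝕜 → F) (a : 𝕜) (b : F) (x : 𝕜) :
    iteratedDeriv k (fun y => f (y - a) + b) x = iteratedDeriv k f (x - a) := by
  simp only [add_comm _ b, iteratedDeriv_const_add hk, iteratedDeriv_comp_sub_const]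

theorem iteratedDeriv_comp_sub_const_mul_add_const (hk : 0 < k) (hw : ContDiff 𝕜 k w)
    (x c b t : 𝕜) :
    iteratedDeriv k (fun s => w (x - c * s) + b) t = (-c) ^ k * iteratedDeriv k w (x - c * t) := by
  have hshift : ContDiff 𝕜 k fun s => w (x - s) := by fun_prop
  have hscale := congrFun (iteratedDeriv_comp_const_mul hshift c) t
  simp only [add_comm _ b, iteratedDeriv_const_add hk]
  rw [hscale, iteratedDeriv_comp_const_sub]
  simp only [smul_eq_mul, ← mul_assoc, ← mul_pow, mul_neg_one]

theorem iteratedDeriv_quadratic_add_const (hk : 0 < k) (hw : ContDiff 𝕜 k w) (κ γ b z : 𝕜) :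
    iteratedDeriv k (fun y => κ * (w y + b) + γ * (w y + b) ^ 2) z =
      (κ + 2 * γ * b) * iteratedDeriv k w z + γ * iteratedDeriv k (fun y => w y ^ 2) z := by
  have hexpand : (fun y => κ * (w y + b) + γ * (w y + b) ^ 2) =
      fun y => (κ * b + γ * b ^ 2) + ((κ + 2 * γ * b) * w y + γ * w y ^ 2) := by
    ext y; ring
  have hlin : ContDiff 𝕜 k fun y => (κ + 2 * γ * b) * w y := by fun_prop
  have hsq : ContDiff 𝕜 k fun y => γ * w y ^ 2 := by fun_prop
  rw [hexpand, iteratedDeriv_const_add hk, iteratedDeriv_fun_add hlin.contDiffAt hsq.contDiffAt,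
    iteratedDeriv_const_mul_field, iteratedDeriv_const_mul_field]

end IteratedDeriv

/-- The profile equation `γ (w²)'' + w w'''' + α w' w''' + β (w'')² = 0` at `z`, to which
equation (1) reduces on shifted traveling waves. -/
def SolvesProfileEq (α β γ : ℝ) (w : ℝ → ℝ) (z : ℝ) : Prop :=
  γ * iteratedDeriv 2 (fun y => w y ^ 2) z + w z * iteratedDeriv 4 w z
    + α * deriv w z * iteratedDeriv 3 w z + β * iteratedDeriv 2 w z ^ 2 = 0

theorem solvesEq1_travelingWave_iff {w : ℝ → ℝ} (hw : ContDiff ℝ 2 w)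
    (α β γ μ c x t : ℝ) :
    SolvesEq1 α β γ (c ^ 2 * (1 + 2 * γ * μ)) μ
        (fun x t => w (x - c * t) + (-μ * c ^ 2)) x t ↔
      SolvesProfileEq α β γ w (x - c * t) := by
  have hshift : ContDiff ℝ 2 fun y => w (y - c * t) := by fun_prop
  have hsq := congrFun (iteratedDeriv_comp_sub_const 2 (fun y => w y ^ 2) (c * t)) x
  rw [SolvesEq1, SolvesProfileEq]
  simp only [← iteratedDeriv_one]
  simp only [iteratedDeriv_comp_sub_const_mul_add_const (k := 2) two_pos hw,
    iteratedDeriv_quadratic_add_const (k := 2) two_pos hshift, hsq, iteratedDeriv_const_mul_field,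
    iteratedDeriv_comp_sub_const, iteratedDeriv_iteratedDeriv, Nat.reduceAdd,
    iteratedDeriv_comp_sub_add_const, Nat.zero_lt_succ]
  constructor <;> intro h <;> linear_combination -h

/-- `r` is a logarithmic derivative of `w`, in the division-free form `w' = r w`, and solves the
Riccati equation `r' = m r² - γ`. -/
structure HasRiccatiLogDeriv (m γ : ℝ) (w r : ℝ → ℝ) : Prop where
  hasDerivAt : ∀ z, HasDerivAt w (r z * w z) z
  hasDerivAt_logDeriv : ∀ z, HasDerivAt r (m * r z ^ 2 - γ) z

/-- The polynomial `qₖ` with `w⁽ᵏ⁾ = qₖ(r) w` whenever `w' = r w` and `r' = m r² - γ`; the recursion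
comes from differentiating this identity. -/
noncomputable def riccatiPoly (m γ : ℝ) : ℕ → ℝ[X]
  | 0 => 1
  | k + 1 => derivative (riccatiPoly m γ k) * (C m * X ^ 2 - C γ) + X * riccatiPoly m γ k

section riccatiPoly

variable (m γ x : ℝ)

theorem eval_riccatiPoly_one : (riccatiPoly m γ 1).eval x = x := by
  simp only [riccatiPoly, derivative_one, zero_mul, mul_one, zero_add, eval_X]

theorem eval_riccatiPoly_two : (riccatiPoly m γ 2).eval x = (1 + m) * x ^ 2 - γ := by
  simp only [riccatiPoly, derivative_one, zero_mul, mul_one, zero_add, derivative_X, one_mul,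
    eval_add, eval_sub, eval_mul, eval_C, eval_pow, eval_X]
  ring

theorem eval_riccatiPoly_three :
    (riccatiPoly m γ 3).eval x = (1 + m) * (1 + 2 * m) * x ^ 3 - (3 + 2 * m) * γ * x := by
  simp only [riccatiPoly, derivative_one, zero_mul, mul_one, zero_add, derivative_X, one_mul,
    derivative_sub, derivative_mul, derivative_C, derivative_X_pow_succ,
    Nat.cast_one, map_add, map_one, pow_one, sub_zero, eval_add, eval_mul, eval_C, eval_one,
    eval_X, eval_sub, eval_pow]
  ring

theorem eval_riccatiPoly_four :
    (riccatiPoly m γ 4).eval x =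
      (1 + m) * (1 + 2 * m) * (1 + 3 * m) * x ^ 4
        - 2 * (1 + m) * (3 + 4 * m) * γ * x ^ 2 + (3 + 2 * m) * γ ^ 2 := by
  simp only [riccatiPoly, derivative_one, zero_mul, mul_one, zero_add, derivative_X, one_mul,
    derivative_sub, derivative_mul, derivative_C, derivative_X_pow_succ,
    Nat.cast_one, map_add, map_one, pow_one, sub_zero, add_zero, eval_add, eval_mul, eval_C,
    eval_one, eval_sub, eval_pow, eval_X]
  ring

end riccatiPoly

theorem hasRiccatiLogDeriv_sech :
    HasRiccatiLogDeriv 1 1 (fun z => 1 / Real.cosh z) (fun z => -Real.tanh z) where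
  hasDerivAt z := by
    have hinv := (Real.hasDerivAt_cosh z).fun_inv (Real.cosh_pos z).ne'
    simp only [one_div, Real.tanh_eq_sinh_div_cosh]
    exact hinv.congr_deriv (by field_simp)
  hasDerivAt_logDeriv z := by
    have hquot := (Real.hasDerivAt_sinh z).fun_div (Real.hasDerivAt_cosh z) (Real.cosh_pos z).ne'
    simp only [Real.tanh_eq_sinh_div_cosh]
    exact hquot.fun_neg.congr_deriv (by field_simp; ring)

namespace HasRiccatiLogDeriv

variable {m γ : ℝ} {w r : ℝ → ℝ}

theorem const_mul (h : HasRiccatiLogDeriv m γ w r) (a : ℝ) :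
    HasRiccatiLogDeriv m γ (fun z => a * w z) r where
  hasDerivAt z := ((h.hasDerivAt z).const_mul a).congr_deriv (by ring)
  hasDerivAt_logDeriv := h.hasDerivAt_logDeriv

theorem comp_const_mul (h : HasRiccatiLogDeriv m γ w r) (k : ℝ) :
    HasRiccatiLogDeriv m (k ^ 2 * γ) (fun z => w (k * z)) (fun z => k * r (k * z)) where
  hasDerivAt z :=
    ((h.hasDerivAt (k * z)).comp z (hasDerivAt_const_mul k)).congr_deriv (by ring)
  hasDerivAt_logDeriv z :=
    (((h.hasDerivAt_logDeriv (k * z)).comp z (hasDerivAt_const_mul k)).const_mul k).congr_deriv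
      (by ring)

theorem hasDerivAt_const_mul_logDeriv (h : HasRiccatiLogDeriv m γ w r) (p z : ℝ) :
    HasDerivAt (fun y => p * r y) (m / p * (p * r z) ^ 2 - p * γ) z := by
  refine ((h.hasDerivAt_logDeriv z).const_mul p).congr_deriv ?_
  rcases eq_or_ne p 0 with rfl | hp
  · simp
  · field_simp

theorem rpow (h : HasRiccatiLogDeriv m γ w r) (hw : ∀ z, w z ≠ 0) (p : ℝ) :
    HasRiccatiLogDeriv (m / p) (p * γ) (fun z => w z ^ p) (fun z => p * r z) where
  hasDerivAt z := by
    refine ((h.hasDerivAt z).rpow_const (.inl (hw z))).congr_deriv ?_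
    rw [Real.rpow_sub_one (hw z)]
    field_simp [hw z]
  hasDerivAt_logDeriv := h.hasDerivAt_const_mul_logDeriv p

theorem sq (h : HasRiccatiLogDeriv m γ w r) :
    HasRiccatiLogDeriv (m / 2) (2 * γ) (fun z => w z ^ 2) (fun z => 2 * r z) where
  hasDerivAt z := ((h.hasDerivAt z).fun_pow 2).congr_deriv (by push_cast; ring)
  hasDerivAt_logDeriv := h.hasDerivAt_const_mul_logDeriv 2

theorem iteratedDeriv_eq (h : HasRiccatiLogDeriv m γ w r) (k : ℕ) :
    iteratedDeriv k w = fun z => (riccatiPoly m γ k).eval (r z) * w z := by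
  induction k with
  | zero => simp [riccatiPoly]
  | succ k ih =>
    ext z
    have hpoly := ((riccatiPoly m γ k).hasDerivAt (r z)).comp z (h.hasDerivAt_logDeriv z)
    rw [iteratedDeriv_succ, ih]
    refine (hpoly.mul (h.hasDerivAt z)).deriv.trans ?_
    simp only [riccatiPoly, Function.comp_apply, eval_add, eval_sub, eval_mul, eval_pow, eval_C,
      eval_X]
    ring

theorem contDiff (h : HasRiccatiLogDeriv m γ w r) (k : ℕ) : ContDiff ℝ k w := by
  refine contDiff_of_differentiable_iteratedDeriv fun j _ => ?_
  rw [h.iteratedDeriv_eq j]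
  have hw : Differentiable ℝ w := fun z => (h.hasDerivAt z).differentiableAt
  have hr : Differentiable ℝ r := fun z => (h.hasDerivAt_logDeriv z).differentiableAt
  exact ((riccatiPoly m γ j).differentiable.comp hr).mul hw

theorem solvesProfileEq (h : HasRiccatiLogDeriv m γ w r) (z : ℝ) :
    SolvesProfileEq (-2 * m) (-(1 + 2 * m)) γ w z := by
  rw [SolvesProfileEq, ← iteratedDeriv_one, h.sq.iteratedDeriv_eq]
  simp only [h.iteratedDeriv_eq, eval_riccatiPoly_one, eval_riccatiPoly_two,
    eval_riccatiPoly_three, eval_riccatiPoly_four]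
  ring

theorem solvesEq1_travelingWave (h : HasRiccatiLogDeriv m γ w r) (μ c x t : ℝ) :
    SolvesEq1 (-2 * m) (-(1 + 2 * m)) γ (c ^ 2 * (1 + 2 * γ * μ)) μ
      (fun x t => w (x - c * t) + (-μ * c ^ 2)) x t :=
  (solvesEq1_travelingWave_iff (h.contDiff 2) _ _ _ _ _ _ _).2 (h.solvesProfileEq _)

end HasRiccatiLogDeriv

theorem hasRiccatiLogDeriv_const_mul_sech_rpow (n k a : ℝ) :
    HasRiccatiLogDeriv (1 / n) (n * k ^ 2) (fun z => a * (1 / Real.cosh (k * z)) ^ n)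
      (fun z => n * (k * -Real.tanh (k * z))) := by
  have hsech_ne (z : ℝ) : 1 / Real.cosh (k * z) ≠ 0 := (one_div_pos.2 (Real.cosh_pos _)).ne'
  simpa only [mul_one] using
    ((hasRiccatiLogDeriv_sech.comp_const_mul k).rpow hsech_ne n).const_mul a

theorem sechn_soliton_profile_solves_eq1_general (n : ℝ) (hn : n ≠ 0)
    (γ μ a₁ a₂ : ℝ) (hγ : 0 ≤ γ / n) :
    ∀ x t : ℝ,
      SolvesEq1 (-2 / n) (-(n + 2) / n) γ
        (a₁ ^ 2 * (1 + 2 * γ * μ)) μ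
        (fun x t =>
          a₂ * (1 / Real.cosh (Real.sqrt (γ / n) * (x - a₁ * t))) ^ n
            + (-μ * a₁ ^ 2)) x t := by
  intro x t
  have hγn : n * Real.sqrt (γ / n) ^ 2 = γ := by
    rw [Real.sq_sqrt hγ, mul_div_cancel₀ _ hn]
  have hsech := hasRiccatiLogDeriv_const_mul_sech_rpow n (Real.sqrt (γ / n)) a₂
  rw [hγn] at hsech
  have hα : -2 * (1 / n) = -2 / n := by ring
  have hβ : -(1 + 2 * (1 / n)) = -(n + 2) / n := by field_simp
  simpa only [hα, hβ] using hsech.solvesEq1_travelingWave μ a₁ x t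

theorem sechn_soliton_profile_solves_eq1 (n : ℝ) (hn : 0 < n)
    (γ μ a₁ a₂ : ℝ) (hγ : 0 < γ) :
    ∀ x t : ℝ,
      SolvesEq1 (-2 / n) (-(n + 2) / n) γ
        (a₁ ^ 2 * (1 + 2 * γ * μ)) μ
        (fun x t =>
          a₂ * (1 / Real.cosh (Real.sqrt (γ / n) * (x - a₁ * t))) ^ n
            + (-μ * a₁ ^ 2)) x t :=
  sechn_soliton_profile_solves_eq1_general n hn.ne' γ μ a₁ a₂ (div_pos hγ hn).le
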